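/- arXiv:0802.1401 — 2 statements merged into one kernel-verified Lean document; each statement's English description precedes it below -/
import Mathlib

section
/- Let b = 0.8 and a = 0.5, so u(1) = 0.5 and u(n+1) = 0.4·sin(π·u(n)) + u(n) + 0.8 for all n ≥ 1. Then there exists a sequence v : ℕ → ℝ with v(n+10) = v(n) + 8 for all n ≥ 1 such that u(n) − v(n) → 0 as n → ∞; that is, u is attracted by a stable periodic helix of period 10 and modulo 8. -/
open Filter
namespace Helix
/-- Rational approximation of `π`. -/
def pq : ℚ := 314159265358979323846 / 10^20
/-- Partial Taylor sums of `cos`, `sin` and the next term of the cosine series. -/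
def tay (t : ℚ) : ℕ → ℚ × ℚ × ℚ
  | 0 => (0, 0, 1)
  | k+1 => let p := tay t k
    (p.1 + p.2.2, p.2.1 + p.2.2 * t / (2*k+1), - (p.2.2 * t * t / ((2*k+1)*(2*k+2))))
/-- Rounding up. -/
def up (x : ℚ) : ℚ := (⌊x * 10^15⌋ + 1 : ℚ) / 10^15
/-- Reduction modulo 2 to `[-1, 1]`. -/
def red (q : ℚ) : ℚ := q - 2 * ⌊q/2 + 1/2⌋
/-- One validated step: (centre, radius, Lipschitz constant). -/
def step (s : ℚ × ℚ × ℚ) : ℚ × ℚ × ℚ :=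
  let T := tay (pq * red s.1) 15
  let K := |1 + 2/5 * pq * T.1| + 4 * s.2.1 + 1/10^12
  (up (2/5 * T.2.1 + s.1 + 4/5), up (K * s.2.1 + 1/10^12), up (K * s.2.2))
/-- Iterated validated steps. -/
def run : ℕ → ℚ × ℚ × ℚ → ℚ × ℚ × ℚ
  | 0, s => s
  | n+1, s => step (run n s)

/-- Approximate orbit at the times `1 + 10 k`, modulo 8. -/
def cen : ℕ → ℚ
  | 0 => 1/2
  | 1 => 446460087/10^10
  | 2 => 531849675/10^10
  | 3 => 614610321/10^10
  | 4 => 591830144/10^10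
  | 5 => 610377626/10^10
  | 6 => 596042050/10^10
  | 7 => 607700797/10^10
  | 8 => 598522687/10^10
  | 9 => 605967006/10^10
  | _ => 600054311/10^10

theorem chkA : ∀ k < 10, |(run 10 (cen k, (k+1)/10^9, 1)).1 - 8 - cen (k+1)|
    + (run 10 (cen k, (k+1)/10^9, 1)).2.1 ≤ (k+2)/10^9 := by
  decide +kernel
theorem chkB : |(run 10 (60268/10^6,3/10^4,1)).1 - 8 - 60268/10^6|
    + (run 10 (60268/10^6,3/10^4,1)).2.1 ≤ 3/10^4 := by
  decide +kernel
theorem chkC : (run 10 (60268/10^6,3/10^4,1)).2.2 ≤ 95/100 := by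
  decide +kernel

theorem tay_sound (t : ℚ) (k : ℕ) :
    (∑ m ∈ Finset.range (2*k), (((t:ℝ):ℂ) * Complex.I)^m / (m.factorial : ℂ)
      = (((tay t k).1 : ℝ) : ℂ) + (((tay t k).2.1 : ℝ) : ℂ) * Complex.I) ∧
    (((t:ℝ):ℂ) * Complex.I)^(2*k) / ((2*k).factorial : ℂ) = (((tay t k).2.2 : ℝ) : ℂ) := by
  induction k with
  | zero => simp [tay]
  | succ k ih =>
    obtain ⟨h1, h2⟩ := ih
    have hA : (((t:ℝ):ℂ) * Complex.I)^(2*k+1) / ((2*k+1).factorial : ℂ)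
        = (((tay t k).2.2 : ℝ) : ℂ) * t / (2*k+1) * Complex.I := by
      rw [← h2, Nat.factorial_succ, pow_succ]
      have : ((2*k).factorial : ℂ) ≠ 0 := by exact_mod_cast Nat.factorial_ne_zero _
      have h3 : (2*(k:ℂ)+1) ≠ 0 := by exact_mod_cast Nat.succ_ne_zero (2*k)
      push_cast
      field_simp
    have hB : (((t:ℝ):ℂ) * Complex.I)^(2*k+2) / ((2*k+2).factorial : ℂ)
        = -((((tay t k).2.2 : ℝ) : ℂ) * t * t / ((2*k+1)*(2*k+2))) := by
      rw [Nat.factorial_succ, pow_succ]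
      have : ((2*k+1).factorial : ℂ) ≠ 0 := by exact_mod_cast Nat.factorial_ne_zero _
      have h3 : (2*(k:ℂ)+1) ≠ 0 := by exact_mod_cast Nat.succ_ne_zero (2*k)
      have h4 : (2*(k:ℂ)+2) ≠ 0 := by exact_mod_cast Nat.succ_ne_zero (2*k+1)
      have h5 : (((t:ℝ):ℂ) * Complex.I)^(2*k+1) * (((t:ℝ):ℂ) * Complex.I) /
         (((2*k+1+1 : ℕ) * (2*k+1).factorial : ℕ) : ℂ)
         = (((t:ℝ):ℂ) * Complex.I)^(2*k+1) / ((2*k+1).factorial : ℂ) *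
           ((((t:ℝ):ℂ) * Complex.I) / (2*k+2)) := by
        push_cast
        have : (2*(k:ℂ)+1+1) ≠ 0 := by exact_mod_cast Nat.succ_ne_zero (2*k+1)
        field_simp
        ring
      rw [h5, hA]
      have h6 := Complex.I_sq
      field_simp
      rw [h6]
      push_cast
      ring
    constructor
    · rw [show 2*(k+1) = 2*k+1+1 by ring, Finset.sum_range_succ, Finset.sum_range_succ, h1, h2, hA]
      simp only [tay]
      push_cast
      ring
    · rw [show 2*(k+1) = 2*k+2 by ring, hB]
      simp only [tay]
      push_cast
      ring

theorem tay_bound (t : ℚ) (ht : |(t:ℝ)| ≤ 4) :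
    |Real.cos t - (tay t 15).1| ≤ 1/10^13 ∧ |Real.sin t - (tay t 15).2.1| ≤ 1/10^13 := by
  have hn : ‖((t:ℝ):ℂ) * Complex.I‖ = |(t:ℝ)| := by
    rw [norm_mul, Complex.norm_I, mul_one, Complex.norm_real, Real.norm_eq_abs]
  have h := Complex.exp_bound' (x := ((t:ℝ):ℂ) * Complex.I) (n := 30) (by
    rw [hn]; norm_num; linarith)
  rw [hn, show 30 = 2*15 by norm_num, (tay_sound t 15).1, Complex.exp_mul_I] at h
  have hb : |(t:ℝ)|^(2*15) / ((2*15).factorial : ℝ) * 2 ≤ 1/10^13 := by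
    have : |(t:ℝ)|^(2*15) ≤ 4^(2*15) := pow_le_pow_left₀ (abs_nonneg _) ht _
    calc _ ≤ (4:ℝ)^(2*15) / ((2*15).factorial : ℝ) * 2 := by gcongr
      _ ≤ _ := by norm_num [Nat.factorial]
  have h' := h.trans hb
  rw [← Complex.ofReal_cos, ← Complex.ofReal_sin] at h'
  constructor
  · refine le_trans ?_ h'
    refine le_trans (le_of_eq ?_) (Complex.abs_re_le_norm _)
    simp [-Complex.ofReal_cos, -Complex.ofReal_sin, Complex.ofReal_re, Complex.ofReal_im]
  · refine le_trans ?_ h'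
    refine le_trans (le_of_eq ?_) (Complex.abs_im_le_norm _)
    simp [-Complex.ofReal_cos, -Complex.ofReal_sin, Complex.ofReal_re, Complex.ofReal_im]

theorem up_bound (x : ℚ) : (x:ℝ) ≤ up x ∧ (up x : ℝ) ≤ x + 1/10^15 := by
  have h1 := Int.floor_le (x * 10^15)
  have h2 := Int.lt_floor_add_one (x * 10^15)
  have : x ≤ up x ∧ up x ≤ x + 1/10^15 := by
    unfold up
    constructor
    · rw [le_div_iff₀ (by positivity)]
      exact h2.le
    · rw [div_le_iff₀ (by positivity), add_mul]
      norm_num at *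
      linarith
  constructor
  · exact_mod_cast this.1
  · have := this.2
    have h : ((up x : ℚ):ℝ) ≤ ((x + 1/10^15 : ℚ) : ℝ) := by exact_mod_cast this
    push_cast at h
    exact h

theorem red_bound (q : ℚ) : |(red q : ℝ)| ≤ 1 := by
  have h1 := Int.floor_le (q/2+1/2)
  have h2 := Int.lt_floor_add_one (q/2+1/2)
  have : |red q| ≤ 1 := by
    unfold red
    rw [abs_le]
    constructor <;> linarith
  exact_mod_cast this

theorem pi_near : |Real.pi - (pq:ℝ)| ≤ 1/10^19 := by
  have h1 := Real.pi_gt_d20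
  have h2 := Real.pi_lt_d20
  unfold pq
  push_cast
  rw [abs_le]
  constructor <;> norm_num at * <;> linarith

theorem trig_bound (q : ℚ) :
    |Real.cos (Real.pi * q) - (tay (pq * red q) 15).1| ≤ 2/10^13 ∧
    |Real.sin (Real.pi * q) - (tay (pq * red q) 15).2.1| ≤ 2/10^13 := by
  have hr := red_bound q
  have e1 : Real.pi * q = Real.pi * red q + (⌊q/2+1/2⌋ : ℤ) * (2 * Real.pi) := by
    unfold red
    push_cast
    ring
  rw [e1, Real.cos_add_int_mul_two_pi, Real.sin_add_int_mul_two_pi]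
  have hd : |Real.pi * red q - ((pq * red q : ℚ):ℝ)| ≤ 1/10^19 := by
    push_cast
    rw [← sub_mul, abs_mul]
    calc _ ≤ (1/10^19 : ℝ) * 1 := by gcongr; exact pi_near
      _ = _ := by norm_num
  have ht : |((pq * red q : ℚ):ℝ)| ≤ 4 := by
    push_cast
    rw [abs_mul]
    have : |(pq:ℝ)| ≤ 4 := by unfold pq; push_cast; rw [abs_le]; norm_num
    calc _ ≤ (4:ℝ) * 1 := by gcongr
      _ = _ := by norm_num
  obtain ⟨hc, hs⟩ := tay_bound _ ht
  have hc' := Real.abs_cos_sub_cos_le (Real.pi * red q) ((pq * red q : ℚ):ℝ)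
  have hs' := Real.abs_sin_sub_sin_le (Real.pi * red q) ((pq * red q : ℚ):ℝ)
  constructor
  · refine (abs_sub_le _ (Real.cos ((pq * red q : ℚ):ℝ)) _).trans ?_
    norm_num at *
    linarith
  · refine (abs_sub_le _ (Real.sin ((pq * red q : ℚ):ℝ)) _).trans ?_
    norm_num at *
    linarith

/-- The map. -/
noncomputable def F (x : ℝ) : ℝ := 0.4 * Real.sin (Real.pi * x) + x + 0.8

theorem F_deriv (x : ℝ) : HasDerivAt F (1 + 0.4 * Real.pi * Real.cos (Real.pi * x)) x := by
  have h := (((Real.hasDerivAt_sin (Real.pi * x)).comp x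
    ((hasDerivAt_id x).const_mul Real.pi)).const_mul (0.4:ℝ)).add (hasDerivAt_id x)
  have h2 := h.add_const (0.8:ℝ)
  convert! h2 using 1
  ring

/-- The local Lipschitz bound. -/
def lipK (q e : ℚ) : ℚ := |1 + 2/5 * pq * (tay (pq * red q) 15).1| + 4 * e + 1/10^12

theorem lipK_nonneg (q e : ℚ) (he : 0 ≤ (e:ℝ)) : 0 ≤ (lipK q e : ℝ) := by
  unfold lipK
  push_cast
  positivity

theorem F_lip (q e : ℚ) (x y : ℝ) (hx : |x - q| ≤ e) (hy : |y - q| ≤ e) :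
    |F x - F y| ≤ lipK q e * |x - y| := by
  have hball : ∀ z ∈ Metric.closedBall (q:ℝ) e,
      ‖1 + 0.4 * Real.pi * Real.cos (Real.pi * z)‖ ≤ (lipK q e : ℝ) := by
    intro z hz
    rw [Metric.mem_closedBall, Real.dist_eq] at hz
    rw [Real.norm_eq_abs]
    obtain ⟨hc, -⟩ := trig_bound q
    set T : ℝ := (((tay (pq * red q) 15).1 : ℚ) : ℝ) with hT
    have hp := pi_near
    have hp3 : Real.pi < 3.15 := Real.pi_lt_d2
    have hp0 := Real.pi_pos
    have h1 : |Real.cos (Real.pi * z) - Real.cos (Real.pi * q)| ≤ Real.pi * e := by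
      refine (Real.abs_cos_sub_cos_le _ _).trans ?_
      rw [← mul_sub, abs_mul, abs_of_pos hp0]
      gcongr
    have h2 : |Real.cos (Real.pi * z) - T| ≤ Real.pi * e + 2/10^13 :=
      (abs_sub_le _ _ _).trans (add_le_add h1 hc)
    have he : 0 ≤ (e:ℝ) := (abs_nonneg _).trans hx
    have h3 : |Real.pi * Real.cos (Real.pi * z) - pq * T| ≤ 10 * e + 1/10^12 := by
      have e1 : Real.pi * Real.cos (Real.pi * z) - pq * T =
        pq * (Real.cos (Real.pi * z) - T) + (Real.pi - pq) * Real.cos (Real.pi * z) := by ring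
      rw [e1]
      refine (abs_add_le _ _).trans ?_
      rw [abs_mul, abs_mul]
      have : |(pq:ℝ)| ≤ 3.15 := by unfold pq; push_cast; rw [abs_le]; norm_num
      have a1 : |(pq:ℝ)| * |Real.cos (Real.pi * z) - T| ≤ 3.15 * (3.15 * e + 2/10^13) := by
        gcongr
        exact h2.trans (by gcongr)
      have a2 : |Real.pi - (pq:ℝ)| * |Real.cos (Real.pi * z)| ≤ 1/10^19 * 1 := by
        gcongr
        exact Real.abs_cos_le_one _
      norm_num at a1 a2 ⊢
      linarith
    have e2 : 1 + 0.4 * Real.pi * Real.cos (Real.pi * z) = (1 + 2/5 * pq * T) +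
       2/5 * (Real.pi * Real.cos (Real.pi * z) - pq * T) := by ring
    rw [e2]
    refine (abs_add_le _ _).trans ?_
    rw [abs_mul (2/5:ℝ), abs_of_pos (by norm_num : (0:ℝ) < 2/5)]
    unfold lipK
    push_cast
    rw [← hT]
    linarith
  have := (convex_closedBall (q:ℝ) (e:ℝ)).norm_image_sub_le_of_norm_hasDerivWithin_le
    (f := F) (fun z _ => (F_deriv z).hasDerivWithinAt) hball
    (x := y) (y := x) (by rwa [Metric.mem_closedBall, Real.dist_eq])
    (by rwa [Metric.mem_closedBall, Real.dist_eq])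
  simpa [Real.norm_eq_abs] using this

theorem step_sound (s : ℚ × ℚ × ℚ) (x : ℝ) (hx : |x - s.1| ≤ s.2.1) :
    |F x - (step s).1| ≤ (step s).2.1 := by
  obtain ⟨q, e, L⟩ := s
  simp only at hx
  have he : 0 ≤ (e:ℝ) := (abs_nonneg _).trans hx
  have h1 := F_lip q e x q hx (by simpa using he)
  have h2 : |F q - (step (q,e,L)).1| ≤ 5/10^13 := by
    obtain ⟨-, hs⟩ := trig_bound q
    have hu := up_bound (2/5 * (tay (pq * red q) 15).2.1 + q + 4/5)
    simp only [step, F]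
    obtain ⟨u1, u2⟩ := hu
    push_cast at u1 u2
    rw [abs_le] at hs ⊢
    norm_num at *
    constructor <;> linarith
  have h3 := (up_bound (lipK q e * e + 1/10^12)).1
  have h4 : (step (q,e,L)).2.1 = up (lipK q e * e + 1/10^12) := rfl
  rw [h4]
  have h5 : (lipK q e : ℝ) * |x - q| ≤ lipK q e * e :=
    mul_le_mul_of_nonneg_left hx (lipK_nonneg q e he)
  have h6 := abs_sub_le (F x) (F q) ((step (q,e,L)).1 : ℝ)
  push_cast at h3
  norm_num at *
  linarith

theorem run_sound (s : ℚ × ℚ × ℚ) (w : ℕ → ℝ) (hw : ∀ n, w (n+1) = F (w n))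
    (h0 : |w 0 - s.1| ≤ s.2.1) (n : ℕ) : |w n - (run n s).1| ≤ (run n s).2.1 := by
  induction n with
  | zero => exact h0
  | succ n ih => rw [hw]; exact step_sound _ _ ih

theorem run_lip (q e : ℚ) (w z : ℕ → ℝ) (hw : ∀ n, w (n+1) = F (w n))
    (hz : ∀ n, z (n+1) = F (z n)) (hw0 : |w 0 - q| ≤ e) (hz0 : |z 0 - q| ≤ e) (n : ℕ) :
    |w n - z n| ≤ (run n (q,e,1)).2.2 * |w 0 - z 0| := by
  induction n with
  | zero => simp [run]
  | succ n ih =>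
    have h1 := run_sound (q,e,1) w hw hw0 n
    have h2 := run_sound (q,e,1) z hz hz0 n
    rw [hw, hz]
    have h3 := F_lip _ _ _ _ h1 h2
    have h4 : (run (n+1) (q,e,1)).2.2 =
      up (lipK (run n (q,e,1)).1 (run n (q,e,1)).2.1 * (run n (q,e,1)).2.2) := rfl
    have h5 := (up_bound (lipK (run n (q,e,1)).1 (run n (q,e,1)).2.1 * (run n (q,e,1)).2.2)).1
    rw [h4]
    push_cast at h5
    have h6 := lipK_nonneg (run n (q,e,1)).1 (run n (q,e,1)).2.1 ((abs_nonneg _).trans h1)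
    calc _ ≤ _ := h3
      _ ≤ (lipK (run n (q,e,1)).1 (run n (q,e,1)).2.1 : ℝ) *
          ((run n (q,e,1)).2.2 * |w 0 - z 0|) := by gcongr
      _ = (lipK (run n (q,e,1)).1 (run n (q,e,1)).2.1 * (run n (q,e,1)).2.2 : ℝ) *
          |w 0 - z 0| := by ring
      _ ≤ _ := by gcongr

theorem F_shift (x : ℝ) (k : ℕ) : F (x - 8 * k) = F x - 8 * k := by
  unfold F
  rw [show Real.pi * (x - 8 * k) = Real.pi * x - ((4 * k : ℕ) : ℝ) * (2 * Real.pi) by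
    push_cast; ring, Real.sin_sub_nat_mul_two_pi]
  ring

theorem F_lip3 (x y : ℝ) : |F x - F y| ≤ 3 * |x - y| := by
  have h := Real.abs_sin_sub_sin_le (Real.pi * x) (Real.pi * y)
  rw [← mul_sub, abs_mul, abs_of_pos Real.pi_pos] at h
  have h2 : F x - F y = 0.4 * (Real.sin (Real.pi * x) - Real.sin (Real.pi * y)) + (x - y) := by
    unfold F; ring
  rw [h2]
  refine (abs_add_le _ _).trans ?_
  rw [abs_mul, abs_of_pos (by norm_num : (0:ℝ) < 0.4)]
  have h3 : Real.pi * |x - y| ≤ 4 * |x - y| :=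
    mul_le_mul_of_nonneg_right Real.pi_le_four (abs_nonneg _)
  linarith [abs_nonneg (x - y)]

theorem cast_check {a b c d k : ℚ} (h : |a - k - b| + c ≤ d) {x : ℝ} (hx : |x - a| ≤ c) :
    |x - k - b| ≤ d := by
  have h' : |(a:ℝ) - k - b| + c ≤ d := by exact_mod_cast h
  have : x - k - b = (x - a) + (a - k - b) := by ring
  rw [this]
  refine (abs_add_le _ _).trans ?_
  linarith

theorem shift_orbit (U : ℕ → ℝ) (hU : ∀ n, U (n+1) = F (U n)) (N k : ℕ) (n : ℕ) :
    (U (N + (n+1)) - 8 * k) = F (U (N + n) - 8 * k) := by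
  rw [F_shift, ← add_assoc, hU]

theorem near_start (U : ℕ → ℝ) (hU : ∀ n, U (n+1) = F (U n)) (h0 : U 0 = 1/2) (k : ℕ)
    (hk : k ≤ 10) : |U (10 * k) - 8 * k - cen k| ≤ (k+1)/10^9 := by
  induction k with
  | zero => simp [h0, cen]
  | succ k ih =>
    have hs := run_sound (cen k, (k+1)/10^9, 1) (fun n => U (10*k + n) - 8 * k)
      (shift_orbit U hU (10*k) k) (by simpa using ih (by omega)) 10
    have := cast_check (chkA k (by omega)) hs
    push_cast at this ⊢
    rw [show 10 * (k+1) = 10 * k + 10 by ring]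
    convert! this using 2 <;> ring

theorem near (U : ℕ → ℝ) (hU : ∀ n, U (n+1) = F (U n)) (h0 : U 0 = 1/2) (k : ℕ) :
    |U (10 * (k+10)) - 8 * ((k+10 : ℕ):ℝ) - ((60268/10^6 : ℚ):ℝ)| ≤ ((3/10^4 : ℚ):ℝ) := by
  induction k with
  | zero =>
    have := near_start U hU h0 10 le_rfl
    simp only [cen] at this
    push_cast at this ⊢
    rw [abs_le] at *
    norm_num at *
    constructor <;> linarith
  | succ k ih =>
    have hs := run_sound (60268/10^6, 3/10^4, 1) (fun n => U (10*(k+10) + n) - 8 * ((k+10 : ℕ):ℝ))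
      (shift_orbit U hU (10*(k+10)) (k+10)) ih 10
    have := cast_check chkB hs
    rw [show 10 * (k+1+10) = 10 * (k+10) + 10 by ring]
    push_cast at this ⊢
    convert! this using 2
    ring

/-- The defect of periodicity. -/
noncomputable def dft (U : ℕ → ℝ) (n : ℕ) : ℝ := |U (n+10) - 8 - U n|

theorem dft_succ (U : ℕ → ℝ) (hU : ∀ n, U (n+1) = F (U n)) (n : ℕ) :
    dft U (n+1) ≤ 3 * dft U n := by
  unfold dft
  have h := F_lip3 (U (n+10) - 8) (U n)
  have h2 := F_shift (U (n+10)) 1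
  norm_num at h2
  rw [h2, ← hU, ← hU] at h
  rwa [show n + 1 + 10 = n + 10 + 1 by ring]

theorem dft_ten (U : ℕ → ℝ) (hU : ∀ n, U (n+1) = F (U n)) (h0 : U 0 = 1/2) (k : ℕ) :
    dft U (10 * (k+1+10)) ≤ 0.95 * dft U (10 * (k+10)) := by
  have h := run_lip (60268/10^6) (3/10^4) (fun n => U (10*(k+1+10) + n) - 8 * ((k+1+10 : ℕ):ℝ))
    (fun n => U (10*(k+10) + n) - 8 * ((k+10 : ℕ):ℝ))
    (shift_orbit U hU (10*(k+1+10)) (k+1+10)) (shift_orbit U hU (10*(k+10)) (k+10))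
    (near U hU h0 (k+1)) (near U hU h0 k) 10
  have hc : (((run 10 (60268/10^6,3/10^4,1)).2.2 : ℚ) : ℝ) ≤ ((95/100 : ℚ) : ℝ) := by
    exact_mod_cast chkC
  have h2 := h.trans (mul_le_mul_of_nonneg_right hc (abs_nonneg _))
  unfold dft
  push_cast at h2
  simp only [add_zero] at h2
  rw [show 10 * (k+1+10) = 10 * (k+10) + 10 by ring] at *
  refine le_trans (le_of_eq ?_) (h2.trans (le_of_eq ?_))
  · congr 1; ring
  · congr 1
    · norm_num
    · congr 1; ring

theorem dft_geom (U : ℕ → ℝ) (hU : ∀ n, U (n+1) = F (U n)) (h0 : U 0 = 1/2) :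
    ∃ C : ℝ, 0 ≤ C ∧ ∀ k i : ℕ, i < 10 → dft U (100 + 10 * k + i) ≤ C * 0.95^k := by
  have hd0 : ∀ n, 0 ≤ dft U n := fun n => abs_nonneg _
  have h1 : ∀ k : ℕ, dft U (10 * (k+10)) ≤ dft U 100 * 0.95^k := by
    intro k
    induction k with
    | zero => simp
    | succ k ih =>
      refine (dft_ten U hU h0 k).trans ?_
      rw [pow_succ]
      linarith
  have h2 : ∀ n i : ℕ, dft U (n + i) ≤ 3^i * dft U n := by
    intro n i
    induction i with
    | zero => simp
    | succ i ih =>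
      refine (dft_succ U hU (n+i)).trans ?_
      rw [pow_succ]
      linarith
  refine ⟨3^10 * dft U 100, by have := hd0 100; positivity, fun k i hi => ?_⟩
  refine (h2 _ i).trans ?_
  have h3 : (3:ℝ)^i ≤ 3^10 := pow_le_pow_right₀ (by norm_num) hi.le
  rw [show 100 + 10 * k = 10 * (k+10) by ring, mul_assoc]
  exact mul_le_mul h3 (h1 k) (hd0 _) (by positivity)

theorem main (U : ℕ → ℝ) (hU : ∀ n, U (n+1) = F (U n)) (h0 : U 0 = 1/2) :
    ∃ V : ℕ → ℝ, (∀ n, V (n+10) = V n + 8) ∧ Tendsto (fun n => U n - V n) atTop (nhds 0) := by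
  obtain ⟨C, hC, hd⟩ := dft_geom U hU h0
  have hd' : ∀ m k : ℕ, dist (U (100 + m + 10 * k) - 8 * k)
      (U (100 + m + 10 * (k+1)) - 8 * ((k+1 : ℕ):ℝ)) ≤ (C * 0.95^(m/10)) * 0.95^k := by
    intro m k
    have h := hd (m/10 + k) (m % 10) (Nat.mod_lt _ (by norm_num))
    rw [show 100 + 10 * (m/10 + k) + m % 10 = 100 + m + 10 * k by omega, pow_add, ← mul_assoc] at h
    refine le_trans (le_of_eq ?_) h
    rw [dist_comm, Real.dist_eq, dft]
    rw [show 100 + m + 10 * (k+1) = 100 + m + 10 * k + 10 by ring]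
    push_cast
    congr 1
    ring
  have hlim : ∀ n : ℕ, ∃ l : ℝ, Tendsto (fun k : ℕ => U (n + 10 * k) - 8 * k) atTop (nhds l) := by
    intro n
    obtain ⟨l, hl⟩ := cauchySeq_tendsto_of_complete
      (cauchySeq_of_le_geometric (0.95:ℝ) _ (by norm_num) (hd' n))
    refine ⟨l + 80 - 160, ?_⟩
    rw [← tendsto_add_atTop_iff_nat 10]
    have := (hl.add_const 80).sub_const 160
    refine this.congr fun k => ?_
    rw [show n + 10 * (k + 10) = 100 + n + 10 * k by ring]
    push_cast
    ring
  choose V hV using hlim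
  refine ⟨V, fun n => ?_, ?_⟩
  · have h1 := (tendsto_add_atTop_iff_nat 1).2 (hV n)
    refine tendsto_nhds_unique (hV (n+10)) ((h1.add_const 8).congr fun k => ?_)
    rw [show n + 10 + 10 * k = n + 10 * (k+1) by ring]
    push_cast
    ring
  · rw [← tendsto_add_atTop_iff_nat 100]
    have hb : ∀ m : ℕ, |U (m+100) - V (m+100)| ≤ (C * 0.95^(m/10)) / (1 - 0.95) := by
      intro m
      have h := dist_le_of_le_geometric_of_tendsto₀ (0.95:ℝ) _ (by norm_num) (hd' m)
        (hV (100+m))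
      rw [Real.dist_eq] at h
      simpa [add_comm] using h
    refine squeeze_zero_norm hb ?_
    have h1 : Tendsto (fun m : ℕ => m / 10) atTop atTop :=
      Nat.tendsto_div_const_atTop (by norm_num)
    have h2 := (tendsto_pow_atTop_nhds_zero_of_lt_one (r := (0.95:ℝ)) (by norm_num)
      (by norm_num)).comp h1
    have h3 := (h2.const_mul C).div_const (1 - 0.95)
    simpa using h3

end Helix

/-- For `b = 0.8` and initial value `a = 0.5`, the iterated sequence is attracted
by a stable periodic helix of period 10 and modulo 8. -/
theorem attracted_by_helix_period_ten_modulo_eight (u : ℕ → ℝ)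
    (h1 : u 1 = 0.5)
    (hrec : ∀ n : ℕ, 1 ≤ n → u (n + 1) = 0.4 * Real.sin (Real.pi * u n) + u n + 0.8) :
    ∃ v : ℕ → ℝ, (∀ n : ℕ, 1 ≤ n → v (n + 10) = v n + 8) ∧
      Tendsto (fun n => u n - v n) atTop (nhds 0) := by
  obtain ⟨V, hV, hT⟩ := Helix.main (fun n => u (n+1)) (fun n => hrec (n+1) (by omega))
    (by rw [h1]; norm_num)
  refine ⟨fun n => V (n-1), fun n hn => ?_, ?_⟩
  · obtain ⟨m, rfl⟩ : ∃ m, n = m + 1 := ⟨n-1, by omega⟩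
    simpa [show m + 1 + 10 - 1 = m + 10 by omega] using hV m
  · rw [← tendsto_add_atTop_iff_nat 1]
    simpa using hT
end

section
/- Let b = 0.7 and a = 0.8, so u(1) = 0.8 and u(n+1) = 0.4·sin(π·u(n)) + u(n) + 0.7 for all n ≥ 1. Then there exists a sequence v : ℕ → ℝ with v(n+3) = v(n) + 2 for all n ≥ 1 such that u(n) − v(n) → 0 as n → ∞; that is, u is attracted by a stable periodic helix of period 3 and modulo 2. -/
open Filter

namespace HelixAux

open Real

theorem nonneg_of_deriv {f f' : ℝ → ℝ} (h0 : f 0 = 0) (hd : ∀ x, HasDerivAt f (f' x) x)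
    (hp : ∀ x, 0 ≤ x → 0 ≤ f' x) : ∀ x, 0 ≤ x → 0 ≤ f x := by
  intro x hx
  have hm : MonotoneOn f (Set.Ici 0) := by
    apply monotoneOn_of_deriv_nonneg (convex_Ici 0)
    · exact fun y _ => (hd y).continuousAt.continuousWithinAt
    · exact fun y _ => (hd y).differentiableAt.differentiableWithinAt
    · intro y hy
      rw [(hd y).deriv]
      rw [interior_Ici] at hy
      exact hp y (le_of_lt hy)
  have := hm (Set.mem_Ici.2 le_rfl) (Set.mem_Ici.2 hx) hx
  rwa [h0] at this

theorem sin_l3 : ∀ x : ℝ, 0 ≤ x → 0 ≤ sin x - (x - x ^ 3 / 6) := by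
  refine nonneg_of_deriv (f' := fun x => cos x - (1 - x ^ 2 / 2)) (by simp) ?_ ?_
  · intro x
    have := (hasDerivAt_sin x).sub ((hasDerivAt_id x).sub ((hasDerivAt_pow 3 x).div_const 6))
    exact this.congr_deriv (by norm_num <;> ring)
  · intro x _
    have := one_sub_sq_div_two_le_cos (x := x)
    linarith

theorem cos_u4 : ∀ x : ℝ, 0 ≤ x → 0 ≤ (1 - x ^ 2 / 2 + x ^ 4 / 24) - cos x := by
  refine nonneg_of_deriv (f' := fun x => sin x - (x - x ^ 3 / 6)) (by simp) ?_ sin_l3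
  intro x
  have := ((((hasDerivAt_pow 2 x).div_const 2).const_sub 1).add
    ((hasDerivAt_pow 4 x).div_const 24)).sub (hasDerivAt_cos x)
  exact this.congr_deriv (by norm_num <;> ring)

theorem sin_u5 : ∀ x : ℝ, 0 ≤ x → 0 ≤ (x - x ^ 3 / 6 + x ^ 5 / 120) - sin x := by
  refine nonneg_of_deriv (f' := fun x => (1 - x ^ 2 / 2 + x ^ 4 / 24) - cos x) (by simp) ?_ cos_u4
  intro x
  have := (((hasDerivAt_id x).sub ((hasDerivAt_pow 3 x).div_const 6)).add
    ((hasDerivAt_pow 5 x).div_const 120)).sub (hasDerivAt_sin x)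
  exact this.congr_deriv (by norm_num <;> ring)

theorem cos_l6 : ∀ x : ℝ, 0 ≤ x → 0 ≤ cos x - (1 - x ^ 2 / 2 + x ^ 4 / 24 - x ^ 6 / 720) := by
  refine nonneg_of_deriv (f' := fun x => (x - x ^ 3 / 6 + x ^ 5 / 120) - sin x) (by simp) ?_ sin_u5
  intro x
  have := (hasDerivAt_cos x).sub (((((hasDerivAt_pow 2 x).div_const 2).const_sub 1).add
    ((hasDerivAt_pow 4 x).div_const 24)).sub ((hasDerivAt_pow 6 x).div_const 720))
  exact this.congr_deriv (by norm_num <;> ring)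

theorem sin_l7 : ∀ x : ℝ, 0 ≤ x →
    0 ≤ sin x - (x - x ^ 3 / 6 + x ^ 5 / 120 - x ^ 7 / 5040) := by
  refine nonneg_of_deriv
    (f' := fun x => cos x - (1 - x ^ 2 / 2 + x ^ 4 / 24 - x ^ 6 / 720)) (by simp) ?_ cos_l6
  intro x
  have := (hasDerivAt_sin x).sub ((((hasDerivAt_id x).sub ((hasDerivAt_pow 3 x).div_const 6)).add
    ((hasDerivAt_pow 5 x).div_const 120)).sub ((hasDerivAt_pow 7 x).div_const 5040))
  exact this.congr_deriv (by norm_num <;> ring)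

/-- rational upper bound of `sin (π p)` -/
noncomputable def SU (p : ℝ) : ℝ := 3.1416 * p - (3.1416 * p) ^ 3 / 6 + (3.1416 * p) ^ 5 / 120
/-- rational lower bound of `sin (π p)` -/
noncomputable def SL (p : ℝ) : ℝ :=
  3.1415 * p - (3.1415 * p) ^ 3 / 6 + (3.1415 * p) ^ 5 / 120 - (3.1415 * p) ^ 7 / 5040
/-- rational upper bound of `cos (π p)` -/
noncomputable def CU (p : ℝ) : ℝ := 1 - (3.1415 * p) ^ 2 / 2 + (3.1415 * p) ^ 4 / 24

theorem pil : (3.1415 : ℝ) < π := by have := pi_gt_d4; linarith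
theorem piu : π < (3.1416 : ℝ) := pi_lt_d4

theorem sin_le_SU {x p : ℝ} (hx : -0.5 ≤ x) (hxp : x ≤ p) (h0 : 0 ≤ p) (hp : p ≤ 0.49) :
    sin (π * x) ≤ SU p := by
  have h1 := pil
  have h2 := piu
  have h3 : sin (π * x) ≤ sin (3.1416 * p) := by
    apply sin_le_sin_of_le_of_le_pi_div_two
    · nlinarith
    · nlinarith
    · nlinarith
  have := sin_u5 (3.1416 * p) (by positivity)
  unfold SU; linarith

theorem SL_le_sin {x p : ℝ} (hx : x ≤ 0.5) (hxp : p ≤ x) (h0 : 0 ≤ p) :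
    SL p ≤ sin (π * x) := by
  have h1 := pil
  have h2 := piu
  have h3 : sin (3.1415 * p) ≤ sin (π * x) := by
    apply sin_le_sin_of_le_of_le_pi_div_two
    · nlinarith
    · nlinarith
    · nlinarith
  have := sin_l7 (3.1415 * p) (by positivity)
  unfold SL; linarith

theorem cos_le_CU {x p : ℝ} (hx : x ≤ 0.5) (hxp : p ≤ x) (h0 : 0 ≤ p) :
    cos (π * x) ≤ CU p := by
  have h1 := pil
  have h2 := piu
  have h3 : cos (π * x) ≤ cos (3.1415 * p) := by
    apply cos_le_cos_of_nonneg_of_le_pi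
    · positivity
    · nlinarith
    · nlinarith
  have := cos_u4 (3.1415 * p) (by positivity)
  unfold CU; linarith

noncomputable def R (z : ℝ) : ℝ := 0.3 - z - 0.4 * sin (π * z)
noncomputable def H (r : ℝ) : ℝ := 0.3 + r - 0.4 * sin (π * r)
noncomputable def G (s : ℝ) : ℝ := 0.7 - s - 0.4 * sin (π * s)

theorem hd_sin (z : ℝ) : HasDerivAt (fun z => sin (π * z)) (cos (π * z) * π) z := by
  have := ((hasDerivAt_id z).const_mul π).sin
  simpa using this

theorem hd_R (z : ℝ) : HasDerivAt R (-(1 + 0.4 * (cos (π * z) * π))) z := by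
  have := ((hasDerivAt_id z).const_sub 0.3).sub ((hd_sin z).const_mul 0.4)
  exact this.congr_deriv (by ring)

theorem hd_G (z : ℝ) : HasDerivAt G (-(1 + 0.4 * (cos (π * z) * π))) z := by
  have := ((hasDerivAt_id z).const_sub 0.7).sub ((hd_sin z).const_mul 0.4)
  exact this.congr_deriv (by ring)

theorem hd_H (z : ℝ) : HasDerivAt H (-(0.4 * (cos (π * z) * π) - 1)) z := by
  have := ((hasDerivAt_id z).const_add 0.3).sub ((hd_sin z).const_mul 0.4)
  exact this.congr_deriv (by ring)

theorem H_der_pos {r : ℝ} (h1 : -0.15 ≤ r) (h2 : r ≤ 0.15) :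
    0 ≤ 0.4 * (cos (π * r) * π) - 1 := by
  have a1 := pil
  have a2 := piu
  have h := one_sub_sq_div_two_le_cos (x := π * r)
  have hr : r ^ 2 ≤ 0.0225 := by nlinarith
  have hpi : π ^ 2 ≤ 9.87 := by nlinarith
  have : (π * r) ^ 2 ≤ 0.23 := by
    rw [mul_pow]
    nlinarith [sq_nonneg r, sq_nonneg π]
  have hc : 0.88 ≤ cos (π * r) := by linarith
  nlinarith

theorem H_anti : AntitoneOn H (Set.Icc (-0.15) 0.15) := by
  apply antitoneOn_of_deriv_nonpos (convex_Icc _ _)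
  · exact fun y _ => (hd_H y).continuousAt.continuousWithinAt
  · exact fun y _ => (hd_H y).differentiableAt.differentiableWithinAt
  · intro y hy
    rw [(hd_H y).deriv]
    rw [interior_Icc] at hy
    have := H_der_pos hy.1.le hy.2.le
    linarith

theorem R_bds {z p q rl rh : ℝ} (hp : 0 ≤ p) (hz1 : p ≤ z) (hz2 : z ≤ q) (hq : q ≤ 0.49)
    (h1 : rl ≤ 0.3 - q - 0.4 * SU q) (h2 : 0.3 - p - 0.4 * SL p ≤ rh) :
    rl ≤ R z ∧ R z ≤ rh := by
  have a := sin_le_SU (x := z) (p := q) (by linarith) hz2 (by linarith) hq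
  have b := SL_le_sin (x := z) (p := p) (by linarith) hz1 hp
  unfold R
  constructor <;> linarith

theorem H_ge {r rh sl : ℝ} (h0 : -0.15 ≤ r) (h : r ≤ rh) (hr0 : 0 ≤ rh) (hr : rh ≤ 0.15)
    (hs : sl ≤ 0.3 + rh - 0.4 * SU rh) : sl ≤ H r := by
  have a := H_anti ⟨h0, h.trans hr⟩ ⟨by linarith, hr⟩ h
  have b := sin_le_SU (x := rh) (p := rh) (by linarith) le_rfl hr0 (by linarith)
  have : sl ≤ H rh := by unfold H; linarith
  linarith

theorem H_le {r : ℝ} (h0 : -0.0125 ≤ r) (h : r ≤ 0.15) : H r ≤ 0.3034 := by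
  have a := H_anti (a := -0.0125) ⟨by norm_num, by norm_num⟩ ⟨by linarith, h⟩ h0
  have b := sin_le_SU (x := 0.0125) (p := 0.0125) (by norm_num) le_rfl (by norm_num) (by norm_num)
  have : H (-0.0125) ≤ 0.3034 := by
    unfold H
    rw [mul_neg, sin_neg]
    unfold SU at b
    norm_num at b ⊢
    linarith
  linarith

noncomputable def F (z : ℝ) : ℝ := G (H (R z))

noncomputable def F' (z : ℝ) : ℝ := (-(1 + 0.4 * (cos (π * H (R z)) * π))) *
  ((-(0.4 * (cos (π * R z) * π) - 1)) * (-(1 + 0.4 * (cos (π * z) * π))))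

theorem hd_F (z : ℝ) : HasDerivAt F (F' z) z :=
  (hd_G _).comp z ((hd_H _).comp z (hd_R z))

theorem global_bds {z : ℝ} (h1 : 0.07 ≤ z) (h2 : z ≤ 0.141) :
    -0.0125 ≤ R z ∧ R z ≤ 0.1428 ∧ 0.2693 ≤ H (R z) ∧ H (R z) ≤ 0.3034 := by
  obtain ⟨a, b⟩ := R_bds (z := z) (p := 0.07) (q := 0.141) (rl := -0.0125) (rh := 0.1428)
    (by norm_num) h1 h2 (by norm_num) (by norm_num [SU]) (by norm_num [SL])
  refine ⟨a, b, ?_, ?_⟩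
  · exact H_ge (by linarith) b (by norm_num) (by norm_num) (by norm_num [SU])
  · exact H_le a (by linarith)

theorem F_maps {z : ℝ} (h1 : 0.07 ≤ z) (h2 : z ≤ 0.141) : 0.07 ≤ F z ∧ F z ≤ 0.141 := by
  obtain ⟨_, _, c, d⟩ := global_bds h1 h2
  have a := sin_le_SU (x := H (R z)) (p := 0.3034) (by linarith) d (by norm_num) (by norm_num)
  have b := SL_le_sin (x := H (R z)) (p := 0.2693) (by linarith) c (by norm_num)
  unfold F G
  norm_num [SU] at a
  norm_num [SL] at b
  constructor <;> linarith

theorem piece {z p q rl rh sl C : ℝ} (hg1 : 0.07 ≤ z) (hg2 : z ≤ 0.141)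
    (hp : 0 ≤ p) (hz1 : p ≤ z) (hz2 : z ≤ q) (hq : q ≤ 0.49)
    (h1 : rl ≤ 0.3 - q - 0.4 * SU q) (h2 : 0.3 - p - 0.4 * SL p ≤ rh)
    (hr0 : 0 ≤ rh) (hr : rh ≤ 0.15) (hs0 : 0 ≤ sl)
    (hs : sl ≤ 0.3 + rh - 0.4 * SU rh)
    (hC : ∀ r, rl ≤ r → r ≤ 0.5 → cos (π * r) ≤ C)
    (hfin : (1 + 0.4 * (CU sl * 3.1416)) * ((0.4 * (C * 3.1416) - 1) *
      (1 + 0.4 * (CU p * 3.1416))) ≤ 0.99) : ‖F' z‖ ≤ 0.99 := by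
  obtain ⟨g1, g2, g3, g4⟩ := global_bds hg1 hg2
  obtain ⟨a, b⟩ := R_bds (z := z) hp hz1 hz2 hq h1 h2
  have hsl : sl ≤ H (R z) := H_ge (by linarith) b hr0 hr hs
  have c1 := cos_le_CU (x := H (R z)) (p := sl) (by linarith) hsl hs0
  have c2 := hC (R z) a (by linarith)
  have c3 := cos_le_CU (x := z) (p := p) (by linarith) hz1 hp
  have a1 := pil
  have a2 := piu
  have n1 : 0 ≤ cos (π * H (R z)) :=
    cos_nonneg_of_neg_pi_div_two_le_of_le (by nlinarith) (by nlinarith)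
  have n3 : 0 ≤ cos (π * z) :=
    cos_nonneg_of_neg_pi_div_two_le_of_le (by nlinarith) (by nlinarith)
  have n2' : 0 ≤ cos (π * R z) :=
    cos_nonneg_of_neg_pi_div_two_le_of_le (by nlinarith) (by nlinarith)
  have n2 := H_der_pos (r := R z) (by linarith) (by linarith)
  have k1 : cos (π * H (R z)) * π ≤ CU sl * 3.1416 :=
    mul_le_mul c1 a2.le pi_pos.le (n1.trans c1)
  have k2 : cos (π * R z) * π ≤ C * 3.1416 :=
    mul_le_mul c2 a2.le pi_pos.le (n2'.trans c2)
  have k3 : cos (π * z) * π ≤ CU p * 3.1416 :=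
    mul_le_mul c3 a2.le pi_pos.le (n3.trans c3)
  have m1 : 0 ≤ cos (π * H (R z)) * π := mul_nonneg n1 pi_pos.le
  have m3 : 0 ≤ cos (π * z) * π := mul_nonneg n3 pi_pos.le
  unfold F'
  rw [norm_mul, norm_mul, norm_neg, norm_neg, norm_neg, Real.norm_of_nonneg n2,
    Real.norm_of_nonneg (by linarith), Real.norm_of_nonneg (by linarith)]
  refine le_trans ?_ hfin
  apply mul_le_mul (by linarith) _ (mul_nonneg n2 (by linarith)) (by linarith)
  exact mul_le_mul (by linarith) (by linarith) (by linarith) (by linarith)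

theorem F'_le {z : ℝ} (h1 : 0.07 ≤ z) (h2 : z ≤ 0.141) : ‖F' z‖ ≤ 0.99 := by
  rcases le_total z 0.09 with h | h
  · exact piece (p := 0.07) (q := 0.09) (rl := 0.0984) (rh := 0.1428) (sl := 0.2693)
      (C := CU 0.0984) h1 h2
      (by norm_num) h1 h (by norm_num) (by norm_num [SU]) (by norm_num [SL]) (by norm_num)
      (by norm_num) (by norm_num) (by norm_num [SU])
      (fun r hr hr' => cos_le_CU hr' hr (by norm_num)) (by norm_num [CU])
  rcases le_total z 0.105 with h' | h'
  · exact piece (p := 0.09) (q := 0.105) (rl := 0.0654) (rh := 0.0985) (sl := 0.2766)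
      (C := CU 0.0654) h1 h2
      (by norm_num) h h' (by norm_num) (by norm_num [SU]) (by norm_num [SL]) (by norm_num)
      (by norm_num) (by norm_num) (by norm_num [SU])
      (fun r hr hr' => cos_le_CU hr' hr (by norm_num)) (by norm_num [CU])
  rcases le_total z 0.12 with h'' | h''
  · exact piece (p := 0.105) (q := 0.12) (rl := 0.0327) (rh := 0.0655) (sl := 0.2837)
      (C := CU 0.0327) h1 h2
      (by norm_num) h' h'' (by norm_num) (by norm_num [SU]) (by norm_num [SL]) (by norm_num)
      (by norm_num) (by norm_num) (by norm_num [SU])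
      (fun r hr hr' => cos_le_CU hr' hr (by norm_num)) (by norm_num [CU])
  · exact piece (p := 0.12) (q := 0.141) (rl := -0.0125) (rh := 0.0328) (sl := 0.2916)
      (C := 1) h1 h2
      (by norm_num) h'' h2 (by norm_num) (by norm_num [SU]) (by norm_num [SL]) (by norm_num)
      (by norm_num) (by norm_num) (by norm_num [SU])
      (fun r _ _ => cos_le_one _) (by norm_num [CU])

theorem F_lip {x y : ℝ} (hx : x ∈ Set.Icc (0.07 : ℝ) 0.141) (hy : y ∈ Set.Icc (0.07 : ℝ) 0.141) :
    ‖F y - F x‖ ≤ 0.99 * ‖y - x‖ :=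
  Convex.norm_image_sub_le_of_norm_hasDerivWithin_le (f' := F')
    (fun z _ => (hd_F z).hasDerivWithinAt) (fun z hz => F'_le hz.1 hz.2) (convex_Icc _ _) hx hy

theorem conv (z : ℕ → ℝ) (h0 : z 0 ∈ Set.Icc (0.07 : ℝ) 0.141) (hz : ∀ k, z (k + 1) = F (z k)) :
    ∃ L, Tendsto z atTop (nhds L) := by
  have hm : ∀ k, z k ∈ Set.Icc (0.07 : ℝ) 0.141 := by
    intro k
    induction k with
    | zero => exact h0
    | succ k ih => rw [hz]; exact F_maps ih.1 ih.2
  have hc : ∀ k, dist (z k) (z (k + 1)) ≤ dist (z 0) (z 1) * 0.99 ^ k := by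
    intro k
    induction k with
    | zero => simp
    | succ k ih =>
      have := F_lip (hm (k + 1)) (hm k)
      rw [← hz, ← hz, ← dist_eq_norm, ← dist_eq_norm] at this
      rw [pow_succ]
      linarith
  exact cauchySeq_tendsto_of_complete (cauchySeq_of_le_geometric _ _ (by norm_num) hc)

end HelixAux

open HelixAux in
/-- For `b = 0.7` and initial value `a = 0.8`, the iterated sequence is attracted
by a stable periodic helix of period 3 and modulo 2. -/
theorem attracted_by_helix_period_three_modulo_two (u : ℕ → ℝ)
    (h1 : u 1 = 0.8)
    (hrec : ∀ n : ℕ, 1 ≤ n → u (n + 1) = 0.4 * Real.sin (Real.pi * u n) + u n + 0.7) :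
    ∃ v : ℕ → ℝ, (∀ n : ℕ, 1 ≤ n → v (n + 3) = v n + 2) ∧
      Tendsto (fun n => u n - v n) atTop (nhds 0) := by
  -- the three basic steps
  have step1 : ∀ k : ℕ, 1 ≤ k →
      u (3 * k + 1) - 2 * k = 1 - R (u (3 * k) - 2 * k) := by
    intro k hk
    rw [hrec (3 * k) (by omega)]
    have : Real.sin (Real.pi * (u (3 * k) - 2 * k)) = Real.sin (Real.pi * u (3 * k)) := by
      rw [← Real.sin_sub_nat_mul_two_pi (Real.pi * u (3 * k)) k]
      congr 1; ring
    unfold R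
    rw [this]; ring
  have step2 : ∀ k : ℕ, 1 ≤ k →
      u (3 * k + 2) - 2 * k = 2 - H (1 - (u (3 * k + 1) - 2 * k)) := by
    intro k hk
    rw [hrec (3 * k + 1) (by omega)]
    have : Real.sin (Real.pi * (1 - (u (3 * k + 1) - 2 * k)))
        = Real.sin (Real.pi * u (3 * k + 1)) := by
      rw [← Real.sin_sub_nat_mul_two_pi (Real.pi * u (3 * k + 1)) k, ← Real.sin_pi_sub]
      congr 1; ring
    unfold H
    rw [this]; ring
  have step3 : ∀ k : ℕ, 1 ≤ k →
      u (3 * (k + 1)) - 2 * ((k + 1 : ℕ) : ℝ) = G (2 - (u (3 * k + 2) - 2 * k)) := by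
    intro k hk
    rw [show 3 * (k + 1) = 3 * k + 2 + 1 by ring, hrec (3 * k + 2) (by omega)]
    have : Real.sin (Real.pi * (2 - (u (3 * k + 2) - 2 * k)))
        = - Real.sin (Real.pi * u (3 * k + 2)) := by
      rw [← Real.sin_sub_nat_mul_two_pi (Real.pi * u (3 * k + 2)) (k + 1), ← Real.sin_neg]
      congr 1; push_cast; ring
    unfold G
    rw [this]; push_cast; ring
  -- the initial point
  have h2 : 1.7345 ≤ u 2 ∧ u 2 ≤ 1.7355 := by
    have e := hrec 1 le_rfl
    have : Real.sin (Real.pi * 0.8) = Real.sin (Real.pi * 0.2) := by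
      rw [← Real.sin_pi_sub]; congr 1; ring
    norm_num only [h1] at e this
    have a := sin_le_SU (x := 1/5) (p := 1/5) (by norm_num) le_rfl (by norm_num) (by norm_num)
    have b := SL_le_sin (x := 1/5) (p := 1/5) (by norm_num) le_rfl (by norm_num)
    rw [this] at e
    norm_num [SU] at a
    norm_num [SL] at b
    norm_num at e
    rw [e]
    constructor <;> linarith
  have h3 : 2.07 ≤ u 3 ∧ u 3 ≤ 2.141 := by
    have e := hrec 2 (by norm_num)
    have : Real.sin (Real.pi * u 2) = - Real.sin (Real.pi * (2 - u 2)) := by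
      rw [← Real.sin_sub_two_pi, ← Real.sin_neg]; congr 1; ring
    have a := sin_le_SU (x := 2 - u 2) (p := 0.2655) (by linarith) (by linarith)
      (by norm_num) (by norm_num)
    have b := SL_le_sin (x := 2 - u 2) (p := 0.2645) (by linarith) (by linarith) (by norm_num)
    rw [this] at e
    norm_num [SU] at a
    norm_num [SL] at b
    norm_num at e
    rw [e]
    constructor <;> linarith
  obtain ⟨L, hL⟩ := conv (fun k => u (3 * (k + 1)) - 2 * ((k + 1 : ℕ) : ℝ))
    (by constructor <;> norm_num <;> linarith) (by
      intro k
      rw [step3 (k + 1) (by omega), step2 (k + 1) (by omega), step1 (k + 1) (by omega)]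
      unfold F
      congr 1
      rw [sub_sub_cancel, sub_sub_cancel])
  have t0 : Tendsto (fun k : ℕ => u (3 * k) - 2 * (k : ℝ)) atTop (nhds L) :=
    (tendsto_add_atTop_iff_nat 1).1 hL
  have t1 : Tendsto (fun k : ℕ => u (3 * k + 1) - 2 * (k : ℝ)) atTop (nhds (1 - R L)) := by
    refine (((hd_R L).continuousAt.tendsto.comp t0).const_sub 1).congr' ?_
    filter_upwards [eventually_ge_atTop 1] with k hk
    exact (step1 k hk).symm
  have t2 : Tendsto (fun k : ℕ => u (3 * k + 2) - 2 * (k : ℝ)) atTop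
      (nhds (2 - H (1 - (1 - R L)))) := by
    refine (((hd_H _).continuousAt.tendsto.comp (t1.const_sub 1)).const_sub 2).congr' ?_
    filter_upwards [eventually_ge_atTop 1] with k hk
    exact (step2 k hk).symm
  generalize 2 - H (1 - (1 - R L)) = L2 at t2
  generalize 1 - R L = L1 at t1
  refine ⟨fun n => (if n % 3 = 0 then L else if n % 3 = 1 then L1 else L2)
    + 2 * ((n / 3 : ℕ) : ℝ), ?_, ?_⟩
  · intro n _
    simp only [Nat.add_mod_right]
    rw [show (n + 3) / 3 = n / 3 + 1 by omega]
    push_cast; ring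
  · rw [Metric.tendsto_atTop] at t0 t1 t2 ⊢
    intro ε hε
    obtain ⟨N0, H0⟩ := t0 ε hε
    obtain ⟨N1, H1⟩ := t1 ε hε
    obtain ⟨N2, H2⟩ := t2 ε hε
    refine ⟨3 * (N0 + N1 + N2 + 1), fun n hn => ?_⟩
    have hq : N0 + N1 + N2 ≤ n / 3 := by omega
    have hlt : n % 3 < 3 := Nat.mod_lt _ (by norm_num)
    have hn3 : n = 3 * (n / 3) + n % 3 := by omega
    simp only
    generalize hdiv : n / 3 = q at *
    generalize hmod : n % 3 = i at *
    rw [Real.dist_eq, hn3]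
    interval_cases i
    · have := H0 q (by omega)
      rw [Real.dist_eq] at this
      convert this using 2
      simp; ring
    · have := H1 q (by omega)
      rw [Real.dist_eq] at this
      convert this using 2
      simp; ring
    · have := H2 q (by omega)
      rw [Real.dist_eq] at this
      convert this using 2
      simp; ring
end
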